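/- The group PSL(2,11) has exactly two conjugacy classes of subgroups of index 11: there exist subgroups H₁ and H₂ of PSL(2,11) of index 11 that are not conjugate to each other, and every subgroup of PSL(2,11) of index 11 is conjugate either to H₁ or to H₂. -/

import Mathlib

/-- `SL(2, 𝔽_p)`: the group of 2×2 matrices of determinant 1 over `ℤ/pℤ`. -/
abbrev SL2 (p : ℕ) := Matrix.SpecialLinearGroup (Fin 2) (ZMod p)

/-- `PSL(2, 𝔽_p)`: the quotient of `SL(2, 𝔽_p)` by its center `{±I}`. -/
abbrev PSL2 (p : ℕ) := SL2 p ⧸ Subgroup.center (SL2 p)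

namespace P11

instance fact11 : Fact (Nat.Prime 11) := ⟨by norm_num⟩

/-- upper unipotent -/
def u (i : ZMod 11) : SL2 11 := ⟨!![1, i; 0, 1], by simp⟩
/-- Weyl element -/
def w : SL2 11 := ⟨!![0, 1; -1, 0], by simp⟩
/-- element of order five modulo the center -/
def d : SL2 11 := ⟨!![2, 0; 0, 6], by rw [Matrix.det_fin_two_of]; decide⟩

lemma u_coe (i : ZMod 11) : (u i : Matrix (Fin 2) (Fin 2) (ZMod 11)) = !![1, i; 0, 1] := rfl
lemma w_coe : (w : Matrix (Fin 2) (Fin 2) (ZMod 11)) = !![0, 1; -1, 0] := rfl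
lemma d_coe : (d : Matrix (Fin 2) (Fin 2) (ZMod 11)) = !![2, 0; 0, 6] := rfl

lemma u_add (i j : ZMod 11) : u (i + j) = u i * u j := by
  apply Subtype.ext
  rw [Matrix.SpecialLinearGroup.coe_mul]
  simp [u_coe, add_comm]

lemma u_zero : u 0 = 1 := by
  ext a b; fin_cases a <;> fin_cases b <;> simp [u_coe]

lemma u_neg (i : ZMod 11) : u (-i) = (u i)⁻¹ := by
  rw [eq_inv_iff_mul_eq_one, ← u_add]; simp [u_zero]

lemma d_u (i : ZMod 11) : d * u i = u (4 * i) * d := by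
  apply Subtype.ext
  rw [Matrix.SpecialLinearGroup.coe_mul, Matrix.SpecialLinearGroup.coe_mul]
  simp only [u_coe, d_coe, Matrix.mul_fin_two]
  revert i; decide

lemma w_sq : w * w = -1 := by
  apply Subtype.ext
  rw [Matrix.SpecialLinearGroup.coe_mul]
  simp only [w_coe, Matrix.mul_fin_two]
  decide

lemma d_w_d : d * w * d = w := by
  apply Subtype.ext
  rw [Matrix.SpecialLinearGroup.coe_mul, Matrix.SpecialLinearGroup.coe_mul]
  simp only [w_coe, d_coe, Matrix.mul_fin_two]
  decide

lemma wu_cube : w * u 1 * (w * u 1) * (w * u 1) = 1 := by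
  apply Subtype.ext
  simp only [Matrix.SpecialLinearGroup.coe_mul, w_coe, u_coe, Matrix.mul_fin_two]
  decide

lemma lower (c : ZMod 11) :
    Matrix.SpecialLinearGroup.transvection (one_ne_zero : (1 : Fin 2) ≠ 0) c
      = w * u (-c) * (w * w * w) := by
  apply Subtype.ext
  simp only [Matrix.SpecialLinearGroup.coe_mul, w_coe, u_coe, Matrix.mul_fin_two]
  ext a b; fin_cases a <;> fin_cases b <;>
    simp [Matrix.SpecialLinearGroup.transvection_coe, Matrix.single]

lemma upper (c : ZMod 11) :
    Matrix.SpecialLinearGroup.transvection (zero_ne_one : (0 : Fin 2) ≠ 1) c = u c := by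
  ext a b; fin_cases a <;> fin_cases b <;>
    simp [u_coe, Matrix.SpecialLinearGroup.transvection_coe, Matrix.single]

/-- `w` acts on the cosets `u i L` through `s`. -/
def Sig (L : Subgroup (SL2 11)) (s : ZMod 11 → ZMod 11) : Prop :=
  ∀ i, (u (s i))⁻¹ * w * u i ∈ L

lemma cover {L : Subgroup (SL2 11)} {s} (h : Sig L s) (g : SL2 11) :
    ∀ i, ∃ j, (u j)⁻¹ * g * u i ∈ L := by
  have hmul : ∀ A B : SL2 11, (∀ i, ∃ j, (u j)⁻¹ * A * u i ∈ L) →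
      (∀ i, ∃ j, (u j)⁻¹ * B * u i ∈ L) → (∀ i, ∃ j, (u j)⁻¹ * (A * B) * u i ∈ L) := by
    intro A B hA hB i
    obtain ⟨j, hj⟩ := hB i
    obtain ⟨k, hk⟩ := hA j
    refine ⟨k, ?_⟩
    have := L.mul_mem hk hj
    convert this using 1; group
  have hw : ∀ i, ∃ j, (u j)⁻¹ * w * u i ∈ L := fun i => ⟨s i, h i⟩
  have hu : ∀ c i, ∃ j, (u j)⁻¹ * u c * u i ∈ L := fun c i => ⟨c + i, by
    rw [u_add, mul_assoc, inv_mul_cancel]; exact L.one_mem⟩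
  refine Matrix.SL2.transvection_induction (fun g => ∀ i, ∃ j, (u j)⁻¹ * g * u i ∈ L) ?_ hmul g
  intro i j hij c
  fin_cases i <;> fin_cases j
  · exact absurd rfl hij
  · have := upper c
    exact this ▸ hu c
  · have := lower c
    exact this ▸ hmul _ _ (hmul _ _ hw (hu _)) (hmul _ _ (hmul _ _ hw hw) hw)
  · exact absurd rfl hij

lemma le_of_sig {L M : Subgroup (SL2 11)} {s} (hL : Sig L s) (hM : Sig M s)
    (hu : ∀ i, u i ∈ L → i = 0) : L ≤ M := by
  intro g hg
  have h : Sig (L ⊓ M) s := fun i => ⟨hL i, hM i⟩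
  obtain ⟨j, h1, h2⟩ := cover h g 0
  rw [u_zero, mul_one] at h1 h2
  have : (u j)⁻¹ ∈ L := by
    have := L.mul_mem h1 (L.inv_mem hg)
    simpa using this
  have hj : j = 0 := hu j (by simpa using L.inv_mem this)
  subst hj
  simpa [u_zero] using h2

lemma eq_of_sig {L M : Subgroup (SL2 11)} {s} (hL : Sig L s) (hM : Sig M s)
    (hu : ∀ i, u i ∈ L → i = 0) (hu' : ∀ i, u i ∈ M → i = 0) : L = M :=
  le_antisymm (le_of_sig hL hM hu) (le_of_sig hM hL hu')

lemma u_pow (i : ZMod 11) (n : ℕ) : u i ^ n = u (n * i) := by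
  induction n with
  | zero => simp [u_zero]
  | succ n ih => rw [pow_succ, ih, ← u_add]; push_cast; ring_nf

lemma u_eq_one {i : ZMod 11} (h : u i = 1) : i = 0 := by
  have := congrArg (fun g : SL2 11 => g.1 0 1) h
  simpa [u] using this

lemma hu_of_index {L : Subgroup (SL2 11)} (h : L.index = 11) (i : ZMod 11) (hi : u i ∈ L) :
    i = 0 := by
  by_contra hne
  have ho : orderOf (u i) = 11 := by
    apply orderOf_eq_prime
    · rw [u_pow]
      have : ((11 : ℕ) : ZMod 11) = 0 := by decide
      rw [this, zero_mul, u_zero]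
    · exact fun h => hne (u_eq_one h)
  have h1 : 11 ∣ Nat.card L := by
    have := orderOf_dvd_natCard (⟨u i, hi⟩ : L)
    rwa [← Subgroup.orderOf_coe, ho] at this
  have h2 := L.card_mul_index
  have h3 := Subgroup.card_dvd_of_injective
    (Matrix.SpecialLinearGroup.toGL : SL2 11 →* GL (Fin 2) (ZMod 11))
    Matrix.SpecialLinearGroup.toGL_injective
  rw [Matrix.card_GL_field, ← h2, h] at h3
  have h4 : 11 * 11 ∣ Nat.card L * 11 := Nat.mul_dvd_mul_right h1 11
  have h5 := h4.trans h3
  simp [Fin.prod_univ_two, ZMod.card] at h5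

lemma mk_inj {L : Subgroup (SL2 11)} (hu : ∀ i, u i ∈ L → i = 0) :
    Function.Injective (fun i => (QuotientGroup.mk (u i) : SL2 11 ⧸ L)) := by
  intro i j hij
  have := QuotientGroup.eq.1 hij
  rw [← u_neg, ← u_add] at this
  have := hu _ this
  linear_combination -this

lemma exists_rep {L : Subgroup (SL2 11)} (h : L.index = 11) (g : SL2 11) :
    ∃ j, (u j)⁻¹ * g ∈ L := by
  have hc : Nat.card (SL2 11 ⧸ L) = 11 := h
  have : Finite (SL2 11 ⧸ L) := Nat.finite_of_card_ne_zero (by rw [hc]; norm_num)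
  have hb := ((Nat.bijective_iff_injective_and_card
    (fun i => (QuotientGroup.mk (u i) : SL2 11 ⧸ L))).2
    ⟨mk_inj (hu_of_index h), by rw [hc]; simp⟩).2 (QuotientGroup.mk g)
  obtain ⟨j, hj⟩ := hb
  exact ⟨j, QuotientGroup.eq.1 hj⟩

lemma index_eq {L : Subgroup (SL2 11)} {s} (hL : Sig L s)
    (hu : ∀ i, u i ∈ L → i = 0) : L.index = 11 := by
  have : Function.Bijective (fun i => (QuotientGroup.mk (u i) : SL2 11 ⧸ L)) := by
    refine ⟨mk_inj hu, ?_⟩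
    intro x
    induction x using QuotientGroup.induction_on with
    | H g =>
      obtain ⟨j, hj⟩ := cover hL g 0
      exact ⟨j, QuotientGroup.eq.2 (by simpa [u_zero] using hj)⟩
  have := Nat.card_congr (Equiv.ofBijective _ this)
  rw [Subgroup.index, ← this]; simp

/-- the permutation determined by its values at `1` and `-1` -/
def sg (s r : ZMod 11) : ZMod 11 → ZMod 11 :=
  fun x => (![0, s, 5 * r, 4 * s, 3 * s, 9 * s, 9 * r, 3 * r, 4 * r, 5 * s, r] : Fin 11 → ZMod 11) x

lemma sg_sol : ∀ s r : ZMod 11, (∀ x, sg s r (sg s r x) = x) →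
    (∀ x, sg s r (sg s r (sg s r (x + 1) + 1) + 1) = x) →
    (s = 1 ∧ r = 2) ∨ (s = 9 ∧ r = 10) := by
  decide +kernel

lemma exists_fix {L : Subgroup (SL2 11)} (h : L.index = 11) :
    ∃ i, (u i)⁻¹ * d * u i ∈ L := by
  obtain ⟨c, hc⟩ := exists_rep h d
  -- want `u (-i + 4 i) d ∈ L`, so `3 i = -c`
  refine ⟨7 * c, ?_⟩
  rw [mul_assoc, d_u, ← mul_assoc, ← u_neg, ← u_add]
  rw [← u_neg] at hc
  convert hc using 3
  clear hc
  revert c; decide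

lemma sig_of {L : Subgroup (SL2 11)} (h : L.index = 11) (hd : d ∈ L) (hm : (-1 : SL2 11) ∈ L) :
    Sig L (sg 1 2) ∨ Sig L (sg 9 10) := by
  have hu := hu_of_index h
  choose s hs using fun i => exists_rep h (w * u i)
  have key : ∀ i j, (u j)⁻¹ * (w * u i) ∈ L → s i = j := by
    intro i j hj
    have := L.mul_mem hj (L.inv_mem (hs i))
    have e : (u j)⁻¹ * (w * u i) * ((u (s i))⁻¹ * (w * u i))⁻¹ = u (-j + s i) := by
      rw [u_add, u_neg]; group
    rw [e] at this
    have := hu _ this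
    linear_combination this
  have h4 : ∀ i, s (4 * i) = 3 * s i := by
    intro i
    apply key
    have e1 : u (4 * i) = d * u i * d⁻¹ := by rw [d_u]; group
    have e2 : u (s i) = d * u (3 * s i) * d⁻¹ := by
      rw [d_u, ← mul_assoc 4 3]
      have : (4 * 3 : ZMod 11) = 1 := by decide
      rw [this, one_mul]; group
    have e3 : w * d = d⁻¹ * w := by
      rw [eq_inv_mul_iff_mul_eq, ← mul_assoc, d_w_d]
    have e4 : (u (3 * s i))⁻¹ * (w * u (4 * i)) = d⁻¹ * ((u (s i))⁻¹ * (w * u i)) * d⁻¹ := by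
      rw [e1, e2]
      have : w * (d * u i * d⁻¹) = d⁻¹ * w * u i * d⁻¹ := by
        rw [← e3]; group
      rw [this]; group
    rw [e4]
    exact L.mul_mem (L.mul_mem (L.inv_mem hd) (hs i)) (L.inv_mem hd)
  have h0 : s 0 = 0 := by
    have := h4 0
    rw [mul_zero] at this
    generalize s 0 = x at this
    revert x; decide
  have hinv : ∀ i, s (s i) = i := by
    intro i
    apply key
    have e : (u i)⁻¹ * (w * u (s i)) = (-1) * ((u (s i))⁻¹ * (w * u i))⁻¹ := by
      rw [← w_sq]
      have e5 : w * w * ((u (s i))⁻¹ * (w * u i))⁻¹ = w * w * (u i)⁻¹ * w⁻¹ * u (s i) := by group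
      have e6 : w * w * (u i)⁻¹ = (u i)⁻¹ * (w * w) := by rw [w_sq]; simp
      rw [e5, e6]; group
    rw [e]
    exact L.mul_mem hm (L.inv_mem (hs i))
  have hcub : ∀ i, s (s (s (i + 1) + 1) + 1) = i := by
    intro i
    apply key
    have e : (u i)⁻¹ * (w * u (s (s (i + 1) + 1) + 1)) =
       ((u (s (i + 1)))⁻¹ * (w * u (i + 1)))⁻¹ *
       ((u (s (s (i + 1) + 1)))⁻¹ * (w * u (s (i + 1) + 1)))⁻¹ := by
      generalize s (s (i + 1) + 1) = b
      generalize s (i + 1) = a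
      rw [add_comm b, add_comm a, add_comm i, u_add, u_add, u_add]
      have e7 : w * u 1 = (w * u 1)⁻¹ * (w * u 1)⁻¹ := by
        rw [eq_inv_mul_iff_mul_eq, eq_inv_iff_mul_eq_one, wu_cube]
      rw [← mul_assoc w, e7]; group
    rw [e]
    exact L.mul_mem (L.inv_mem (hs _)) (L.inv_mem (hs _))
  have hsg : s = sg (s 1) (s 10) := by
    have a1 := h4 1
    have a2 := h4 4
    have a3 := h4 5
    have a4 := h4 9
    have b1 := h4 10
    have b2 := h4 7
    have b3 := h4 6
    have b4 := h4 2
    have c1 : (4 * 1 : ZMod 11) = 4 := by decide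
    have c2 : (4 * 4 : ZMod 11) = 5 := by decide
    have c3 : (4 * 5 : ZMod 11) = 9 := by decide
    have c4 : (4 * 9 : ZMod 11) = 3 := by decide
    have d1 : (4 * 10 : ZMod 11) = 7 := by decide
    have d2 : (4 * 7 : ZMod 11) = 6 := by decide
    have d3 : (4 * 6 : ZMod 11) = 2 := by decide
    have d4 : (4 * 2 : ZMod 11) = 8 := by decide
    rw [c1] at a1
    rw [c2, a1] at a2
    rw [c3, a2] at a3
    rw [c4, a3] at a4
    rw [d1] at b1
    rw [d2, b1] at b2
    rw [d3, b2] at b3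
    rw [d4, b3] at b4
    have m3 : ∀ x : ZMod 11, 3 * (3 * x) = 9 * x := by decide
    have m9 : ∀ x : ZMod 11, 3 * (9 * x) = 5 * x := by decide
    have m5 : ∀ x : ZMod 11, 3 * (5 * x) = 4 * x := by decide
    simp only [m3, m9, m5] at a2 a3 a4 b2 b3 b4
    funext x
    change Fin 11 at x
    fin_cases x
    · exact h0
    · rfl
    · exact b3
    · exact a4
    · exact a1
    · exact a2
    · exact b2
    · exact b1
    · exact b4
    · exact a3
    · rfl
  have hS : Sig L s := fun i => by simpa [mul_assoc] using hs i
  rw [hsg] at hinv hcub hS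
  rcases sg_sol _ _ hinv hcub with ⟨h1, h2⟩ | ⟨h1, h2⟩
  · left; rwa [h1, h2] at hS
  · right; rwa [h1, h2] at hS

/-- the action on vectors -/
def ap (g : SL2 11) (v : ZMod 11 × ZMod 11) : ZMod 11 × ZMod 11 :=
  (g.1 0 0 * v.1 + g.1 0 1 * v.2, g.1 1 0 * v.1 + g.1 1 1 * v.2)

lemma ap_mul (g h : SL2 11) (v) : ap (g * h) v = ap g (ap h v) := by
  ext <;> simp [ap, Matrix.mul_apply, Fin.sum_univ_two] <;> ring

lemma ap_one (v) : ap 1 v = v := by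
  ext <;> simp [ap]

/-- degree 19 covariant of the binary icosahedral group, reduced as a function on vectors -/
def tau (e : ZMod 11) (v : ZMod 11 × ZMod 11) : ZMod 11 × ZMod 11 :=
  (2 * v.2 ^ 9 + 8 * e * v.1 ^ 5 * v.2 ^ 4 - v.1 ^ 10 * v.2 ^ 9,
    -(2 * v.1 ^ 9 + 3 * e * v.1 ^ 4 * v.2 ^ 5 - v.1 ^ 9 * v.2 ^ 10))

/-- the binary icosahedral subgroup -/
def Lsub (e : ZMod 11) : Subgroup (SL2 11) where
  carrier := {g | ∀ v, ap g (tau e v) = tau e (ap g v)}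
  mul_mem' := by
    intro a b ha hb v
    rw [ap_mul, ap_mul, hb, ha]
  one_mem' := fun v => by rw [ap_one, ap_one]
  inv_mem' := by
    intro a ha v
    have := ha (ap a⁻¹ v)
    rw [← ap_mul, mul_inv_cancel, ap_one] at this
    rw [← this, ← ap_mul, inv_mul_cancel, ap_one]

lemma mem_Lsub {e g} : g ∈ Lsub e ↔ ∀ v, ap g (tau e v) = tau e (ap g v) := Iff.rfl


lemma Lsub_sig1 : Sig (Lsub 1) (sg 1 2) := by
  intro i v
  obtain ⟨x, y⟩ := v
  have : ap ((u (sg 1 2 i))⁻¹ * w * u i) = fun v =>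
     (sg 1 2 i * v.1 + (1 + i * sg 1 2 i) * v.2, - v.1 - i * v.2) := by
    rw [← u_neg]
    funext v
    simp only [ap, Matrix.SpecialLinearGroup.coe_mul, w_coe, u_coe, Matrix.mul_fin_two]
    ext <;> simp <;> first | (left; ring1) | ring1
  rw [this]
  clear this
  revert i x y
  decide +kernel

lemma Lsub_sig2 : Sig (Lsub (-1)) (sg 9 10) := by
  intro i v
  obtain ⟨x, y⟩ := v
  have : ap ((u (sg 9 10 i))⁻¹ * w * u i) = fun v =>
     (sg 9 10 i * v.1 + (1 + i * sg 9 10 i) * v.2, - v.1 - i * v.2) := by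
    rw [← u_neg]
    funext v
    simp only [ap, Matrix.SpecialLinearGroup.coe_mul, w_coe, u_coe, Matrix.mul_fin_two]
    ext <;> simp <;> first | (left; ring1) | ring1
  rw [this]
  clear this
  revert i x y
  decide +kernel

lemma Lsub_hu (e : ZMod 11) (he : e = 1 ∨ e = -1) (i : ZMod 11) (hi : u i ∈ Lsub e) : i = 0 := by
  have h := hi (0, 1)
  have h2 := hi (1, 0)
  simp only [ap, u_coe] at h h2
  clear hi
  rcases he with rfl | rfl <;> revert i <;> decide +kernel

lemma Lsub_d (e : ZMod 11) : d ∈ Lsub e := by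
  rintro ⟨x, y⟩
  simp only [ap, d_coe, tau]
  revert e x y
  decide +kernel

lemma center_le (e : ZMod 11) : Subgroup.center (SL2 11) ≤ Lsub e := by
  intro g hg
  obtain ⟨r, hr, h⟩ := Matrix.SpecialLinearGroup.mem_center_iff.1 hg
  intro v
  have hv : ∀ v, ap g v = (r * v.1, r * v.2) := by
    intro v; simp [ap, ← h]
  rw [hv, hv]
  simp at hr
  rcases hr with rfl | rfl
  · simp
  · ext <;> simp only [tau] <;> ring

/-- the quotient map -/
abbrev q : SL2 11 →* PSL2 11 := QuotientGroup.mk' (Subgroup.center (SL2 11))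

lemma q_surj : Function.Surjective q := QuotientGroup.mk'_surjective _

lemma comap_map (e : ZMod 11) : ((Lsub e).map q).comap q = Lsub e := by
  rw [Subgroup.comap_map_eq, QuotientGroup.ker_mk', sup_eq_left]
  exact center_le e

lemma index_H {e : ZMod 11} {s} (h : Sig (Lsub e) s) (he : e = 1 ∨ e = -1) :
    ((Lsub e).map q).index = 11 := by
  rw [← Subgroup.index_comap_of_surjective _ q_surj, comap_map]
  exact index_eq h (Lsub_hu e he)

lemma mem_conj {G : Type*} [Group G] (g x : G) (K : Subgroup G) :
    x ∈ Subgroup.map (MulAut.conj g).toMonoidHom K ↔ g⁻¹ * x * g ∈ K := by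
  rw [Subgroup.mem_map]
  constructor
  · rintro ⟨y, hy, rfl⟩
    simpa [mul_assoc] using hy
  · intro h
    exact ⟨_, h, by simp [mul_assoc]⟩

lemma index_conj {G : Type*} [Group G] (g : G) (K : Subgroup G) :
    (Subgroup.map (MulAut.conj g).toMonoidHom K).index = K.index :=
  Subgroup.index_map_equiv K (MulAut.conj g)

lemma eq_H {K : Subgroup (PSL2 11)} {e : ZMod 11} (h : K.comap q = Lsub e) :
    K = (Lsub e).map q := by
  rw [← h, Subgroup.map_comap_eq_self_of_surjective q_surj]

lemma exists_conj (K : Subgroup (PSL2 11)) (hK : K.index = 11) :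
    ∃ g, Subgroup.map (MulAut.conj g).toMonoidHom K = (Lsub 1).map q ∨
      Subgroup.map (MulAut.conj g).toMonoidHom K = (Lsub (-1)).map q := by
  have hL : (K.comap q).index = 11 := by
    rw [Subgroup.index_comap_of_surjective _ q_surj, hK]
  obtain ⟨i, hi⟩ := exists_fix hL
  refine ⟨q (u i), ?_⟩
  set K' := Subgroup.map (MulAut.conj (q (u i))).toMonoidHom K with hK'
  have hL' : (K'.comap q).index = 11 := by
    rw [Subgroup.index_comap_of_surjective _ q_surj, hK', index_conj, hK]
  have hd : d ∈ K'.comap q := by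
    rw [Subgroup.mem_comap, hK', mem_conj, ← map_inv, ← map_mul, ← map_mul]
    exact hi
  have hm : (-1 : SL2 11) ∈ K'.comap q := by
    rw [Subgroup.mem_comap]
    have : q (-1) = 1 := (QuotientGroup.eq_one_iff _).2 (by
      rw [Subgroup.mem_center_iff]; intro g; simp)
    rw [this]; exact K'.one_mem
  rcases sig_of hL' hd hm with h | h
  · left
    exact eq_H (eq_of_sig h Lsub_sig1 (hu_of_index hL') (Lsub_hu _ (Or.inl rfl)))
  · right
    exact eq_H (eq_of_sig h Lsub_sig2 (hu_of_index hL') (Lsub_hu _ (Or.inr rfl)))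

lemma not_conj (g : PSL2 11) :
    Subgroup.map (MulAut.conj g).toMonoidHom ((Lsub 1).map q) ≠ (Lsub (-1)).map q := by
  intro h
  obtain ⟨g, rfl⟩ := q_surj g
  have key : ∀ x, x ∈ Lsub (-1) ↔ g⁻¹ * x * g ∈ Lsub 1 := by
    intro x
    rw [← comap_map (-1), ← comap_map 1, Subgroup.mem_comap, Subgroup.mem_comap, ← h, mem_conj]
    simp only [map_mul, map_inv]
  obtain ⟨j, hj⟩ := cover Lsub_sig1 g 0
  rw [u_zero, mul_one] at hj
  have h1 := (key d).1 (Lsub_d _)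
  have h2 := (Lsub 1).mul_mem ((Lsub 1).mul_mem ((Lsub 1).mul_mem hj h1) ((Lsub 1).inv_mem hj))
    ((Lsub 1).inv_mem (Lsub_d 1))
  have e : (u j)⁻¹ * g * (g⁻¹ * d * g) * ((u j)⁻¹ * g)⁻¹ * d⁻¹ = u (-j + 4 * j) := by
    have : (u j)⁻¹ * g * (g⁻¹ * d * g) * ((u j)⁻¹ * g)⁻¹ * d⁻¹ = (u j)⁻¹ * (d * u j) * d⁻¹ := by
      group
    rw [this, d_u, u_add, u_neg]; group
  rw [e] at h2
  have h3 := Lsub_hu 1 (Or.inl rfl) _ h2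
  have hj0 : j = 0 := by
    clear e h2 hj
    revert j; decide
  subst hj0
  have hg : g ∈ Lsub 1 := by simpa [u_zero] using hj
  have k1 : (u (sg 1 2 1))⁻¹ * w * u 1 ∈ Lsub (-1) := (key _).2
    ((Lsub 1).mul_mem ((Lsub 1).mul_mem ((Lsub 1).inv_mem hg) (Lsub_sig1 1)) hg)
  have k2 := (Lsub (-1)).mul_mem k1 ((Lsub (-1)).inv_mem (Lsub_sig2 1))
  have e2 : (u (sg 1 2 1))⁻¹ * w * u 1 * ((u (sg 9 10 1))⁻¹ * w * u 1)⁻¹ =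
      u (- sg 1 2 1 + sg 9 10 1) := by
    rw [u_add, u_neg]; group
  rw [e2] at k2
  have := Lsub_hu _ (Or.inr rfl) _ k2
  revert this; decide

end P11

/-- `PSL(2,11)` has exactly two conjugacy classes of subgroups of index 11:
there are index-11 subgroups `H₁`, `H₂` that are not conjugate, and every index-11
subgroup is conjugate to `H₁` or to `H₂`. -/
theorem stmt_6 :
    ∃ H₁ H₂ : Subgroup (PSL2 11),
      H₁.index = 11 ∧ H₂.index = 11 ∧
      (¬ ∃ g : PSL2 11, Subgroup.map (MulAut.conj g).toMonoidHom H₁ = H₂) ∧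
      ∀ K : Subgroup (PSL2 11), K.index = 11 →
        (∃ g : PSL2 11, Subgroup.map (MulAut.conj g).toMonoidHom K = H₁) ∨
        (∃ g : PSL2 11, Subgroup.map (MulAut.conj g).toMonoidHom K = H₂) := by
  refine ⟨(P11.Lsub 1).map P11.q, (P11.Lsub (-1)).map P11.q,
    P11.index_H P11.Lsub_sig1 (Or.inl rfl), P11.index_H P11.Lsub_sig2 (Or.inr rfl), ?_, ?_⟩
  · rintro ⟨g, hg⟩
    exact P11.not_conj g hg
  · intro K hK
    obtain ⟨g, h | h⟩ := P11.exists_conj K hK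
    · exact Or.inl ⟨g, h⟩
    · exact Or.inr ⟨g, h⟩
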